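/- Let 0 < a < c and set m = a/c. Define h = −(∫₀^{a} s²·((c² − s²)(a² − s²))^{−1/2} ds)/(∫₀^{a} ((c² − s²)(a² − s²))^{−1/2} ds). Then ∫_{a}^{c} (s² + h) · ((c² − s²)(s² − a²))^{−1/2} ds = π c / (2 K(m)), where K(m) = ∫₀¹ ((1 − t²)(1 − m²t²))^{−1/2} dt is the complete elliptic integral of the first kind. -/

import Mathlib

/-!
Substituting `s = a sin θ` on the gap `(0, a)` and `s = √(c² cos² θ + a² sin² θ)` on the band
`(a, c)` turns every integral into a complete elliptic integral: with parameter `m = (a / c)²`, the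
gap integrals are `K m / c` and `c (K m - E m)`, and the band integral is
`c E (1 - m) + (h / c) K (1 - m)`. Since `h = -c² (K m - E m) / K m`, the claim is Legendre's
relation `E m K (1 - m) + E (1 - m) K m - K m K (1 - m) = π / 2`. Its left-hand side has derivative
zero on `(0, 1)`, and tends to `π / 2` as `m → 0` because `K m - E m = O(m)` while
`K (1 - m) = O(m ^ (-1/2))`.
-/

open Set Filter Topology MeasureTheory Asymptotics Real

theorem hasDerivAt_intervalIntegral_of_continuousOn {𝕜 E : Type*} [RCLike 𝕜]
    [NormedAddCommGroup E] [NormedSpace ℝ E] [NormedSpace 𝕜 E]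
    {μ : Measure ℝ} [IsLocallyFiniteMeasure μ] {F F' : 𝕜 → ℝ → E} {a b : ℝ} {x₀ : 𝕜} {U : Set 𝕜}
    (hU : U ∈ 𝓝 x₀) (hF : ∀ x ∈ U, ContinuousOn (F x) (uIcc a b))
    (hF' : ContinuousOn (Function.uncurry F') (U ×ˢ uIcc a b))
    (hderiv : ∀ x ∈ U, ∀ t ∈ uIcc a b, HasDerivAt (fun y => F y t) (F' x t) x) :
    HasDerivAt (fun x => ∫ t in a..b, F x t ∂μ) (∫ t in a..b, F' x₀ t ∂μ) x₀ := by
  obtain ⟨V, hV, hVU, hVcompact⟩ := local_compact_nhds hU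
  obtain ⟨C, hC⟩ := (hVcompact.prod isCompact_uIcc).exists_bound_of_continuousOn
    (hF'.mono (prod_mono_left hVU))
  have hF'_x₀ : ContinuousOn (F' x₀) (uIcc a b) :=
    hF'.comp (Continuous.prodMk_right x₀).continuousOn fun t ht => ⟨mem_of_mem_nhds hU, ht⟩
  refine (intervalIntegral.hasDerivAt_integral_of_dominated_loc_of_deriv_le
    (bound := fun _ => C) hV ?_ (hF x₀ (mem_of_mem_nhds hU)).intervalIntegrable ?_ ?_
    intervalIntegrable_const ?_).2
  · filter_upwards [hU] with x hx
    exact (hF x hx).intervalIntegrable.aestronglyMeasurable_restrict_uIoc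
  · exact hF'_x₀.intervalIntegrable.aestronglyMeasurable_restrict_uIoc
  · exact .of_forall fun t ht x hx => hC (x, t) ⟨hx, uIoc_subset_uIcc ht⟩
  · exact .of_forall fun t ht x hx => hderiv x (hVU hx) t (uIoc_subset_uIcc ht)

/-- Legendre's `Δ(θ)`, in terms of the parameter `m` (the square of the modulus). -/
noncomputable def ellipticDelta (m θ : ℝ) : ℝ := √(1 - m * sin θ ^ 2)

/-- The complete elliptic integral of the first kind, in terms of the parameter `m`. -/
noncomputable def ellipticK (m : ℝ) : ℝ := ∫ θ in (0 : ℝ)..(π / 2), (ellipticDelta m θ)⁻¹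

/-- The complete elliptic integral of the second kind, in terms of the parameter `m`. -/
noncomputable def ellipticE (m : ℝ) : ℝ := ∫ θ in (0 : ℝ)..(π / 2), ellipticDelta m θ

/-- The integrals of all powers of `Δ`; they contain `ellipticE` (`n = 1`) and `ellipticK`
(`n = -1`), and are closed under differentiation in `m`. -/
noncomputable def ellipticMoment (n : ℤ) (m : ℝ) : ℝ :=
  ∫ θ in (0 : ℝ)..(π / 2), ellipticDelta m θ ^ n

section Delta

variable {m : ℝ}

theorem one_sub_mul_sin_sq_pos (hm : m < 1) (θ : ℝ) : 0 < 1 - m * sin θ ^ 2 := by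
  rw [sub_pos]
  rcases le_or_gt m 0 with hm0 | hm0
  · exact (mul_nonpos_of_nonpos_of_nonneg hm0 (sq_nonneg _)).trans_lt one_pos
  · exact (mul_le_of_le_one_right hm0.le (sin_sq_le_one θ)).trans_lt hm

theorem ellipticDelta_pos (hm : m < 1) (θ : ℝ) : 0 < ellipticDelta m θ :=
  Real.sqrt_pos.2 (one_sub_mul_sin_sq_pos hm θ)

theorem ellipticDelta_sq (hm : m < 1) (θ : ℝ) : ellipticDelta m θ ^ 2 = 1 - m * sin θ ^ 2 :=
  Real.sq_sqrt (one_sub_mul_sin_sq_pos hm θ).le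

theorem sqrt_one_sub_le_ellipticDelta (hm : 0 ≤ m) (θ : ℝ) : √(1 - m) ≤ ellipticDelta m θ :=
  Real.sqrt_le_sqrt <| sub_le_sub_left (mul_le_of_le_one_right hm (sin_sq_le_one θ)) 1

theorem continuous_uncurry_ellipticDelta : Continuous (Function.uncurry ellipticDelta) := by
  unfold ellipticDelta Function.uncurry
  fun_prop

theorem continuous_ellipticDelta (m : ℝ) : Continuous (ellipticDelta m) :=
  continuous_uncurry_ellipticDelta.comp (Continuous.prodMk_right m)

theorem continuous_ellipticDelta_zpow (hm : m < 1) (n : ℤ) :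
    Continuous fun θ => ellipticDelta m θ ^ n :=
  (continuous_ellipticDelta m).zpow₀ n fun θ => .inl (ellipticDelta_pos hm θ).ne'

theorem intervalIntegrable_ellipticDelta_zpow (hm : m < 1) (n : ℤ) (a b : ℝ) :
    IntervalIntegrable (fun θ => ellipticDelta m θ ^ n) volume a b :=
  (continuous_ellipticDelta_zpow hm n).intervalIntegrable a b

theorem intervalIntegrable_ellipticDelta (m a b : ℝ) :
    IntervalIntegrable (ellipticDelta m) volume a b :=
  (continuous_ellipticDelta m).intervalIntegrable a b

theorem intervalIntegrable_inv_ellipticDelta (hm : m < 1) (a b : ℝ) :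
    IntervalIntegrable (fun θ => (ellipticDelta m θ)⁻¹) volume a b := by
  simpa only [zpow_neg_one] using intervalIntegrable_ellipticDelta_zpow hm (-1) a b

theorem hasDerivAt_ellipticDelta_left (hm : m < 1) (θ : ℝ) :
    HasDerivAt (fun y => ellipticDelta y θ) (-(sin θ ^ 2) / (2 * ellipticDelta m θ)) m := by
  have hradicand : HasDerivAt (fun y : ℝ => 1 - y * sin θ ^ 2) (-(sin θ ^ 2)) m := by
    simpa only [one_mul] using ((hasDerivAt_id' m).mul_const (sin θ ^ 2)).const_sub 1
  exact hradicand.sqrt (one_sub_mul_sin_sq_pos hm θ).ne'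

theorem hasDerivAt_ellipticDelta_right (hm : m < 1) (θ : ℝ) :
    HasDerivAt (ellipticDelta m) (-(m * sin θ * cos θ / ellipticDelta m θ)) θ := by
  have hradicand : HasDerivAt (fun φ => 1 - m * sin φ ^ 2) (-(m * (2 * sin θ * cos θ))) θ := by
    simpa using (((hasDerivAt_sin θ).fun_pow 2).const_mul m).const_sub 1
  refine (hradicand.sqrt (one_sub_mul_sin_sq_pos hm θ).ne').congr_deriv ?_
  change _ / (2 * ellipticDelta m θ) = _
  ring

theorem hasDerivAt_ellipticDelta_zpow_left (hm : m < 1) (n : ℤ) (θ : ℝ) :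
    HasDerivAt (fun y => ellipticDelta y θ ^ n)
      (-(n / 2) * (sin θ ^ 2 * ellipticDelta m θ ^ (n - 2))) m := by
  have hΔ := (ellipticDelta_pos hm θ).ne'
  refine ((hasDerivAt_zpow n _ (.inl hΔ)).comp m
    (hasDerivAt_ellipticDelta_left hm θ)).congr_deriv ?_
  rw [zpow_sub_one₀ hΔ, zpow_sub₀ hΔ, zpow_ofNat]
  field_simp

-- The factor `m` makes the derivative a combination of powers of `Δ` alone.
theorem hasDerivAt_mul_sin_mul_cos_mul_ellipticDelta_zpow (hm : m < 1) (n : ℤ) (θ : ℝ) :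
    HasDerivAt (fun φ => m * (sin φ * cos φ * ellipticDelta m φ ^ n))
      ((n + 2) * ellipticDelta m θ ^ (n + 2) - (n + 1) * (2 - m) * ellipticDelta m θ ^ n +
        n * (1 - m) * ellipticDelta m θ ^ (n - 2)) θ := by
  have hΔ := (ellipticDelta_pos hm θ).ne'
  have hpow := (hasDerivAt_zpow n _ (.inl hΔ)).comp θ (hasDerivAt_ellipticDelta_right hm θ)
  refine ((((hasDerivAt_sin θ).mul (hasDerivAt_cos θ)).mul hpow).const_mul m).congr_deriv ?_
  have hsin : m * sin θ ^ 2 = 1 - ellipticDelta m θ ^ 2 := by linarith [ellipticDelta_sq hm θ]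
  have hcos : m * cos θ ^ 2 = ellipticDelta m θ ^ 2 - (1 - m) := by
    rw [cos_sq']
    linarith
  simp only [Function.comp_apply, Pi.mul_apply]
  rw [zpow_sub_one₀ hΔ, zpow_sub₀ hΔ, zpow_add₀ hΔ, zpow_ofNat]
  generalize ellipticDelta m θ ^ n = p
  generalize ellipticDelta m θ = d at *
  calc _ = (m * cos θ ^ 2 - m * sin θ ^ 2) * p
          - n * (m * sin θ ^ 2) * (m * cos θ ^ 2) * (p / d ^ 2) := by
        field_simp
        ring
    _ = _ := by
        rw [hsin, hcos]
        field_simp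
        ring

end Delta

section Moment

variable {m : ℝ}

theorem ellipticMoment_one : ellipticMoment 1 = ellipticE := by
  funext m
  simp only [ellipticMoment, ellipticE, zpow_one]

theorem ellipticMoment_neg_one : ellipticMoment (-1) = ellipticK := by
  funext m
  simp only [ellipticMoment, ellipticK, zpow_neg_one]

theorem hasDerivAt_ellipticMoment (n : ℤ) (hm : m < 1) :
    HasDerivAt (ellipticMoment n)
      (∫ θ in (0 : ℝ)..(π / 2), -(n / 2) * (sin θ ^ 2 * ellipticDelta m θ ^ (n - 2))) m := by
  refine hasDerivAt_intervalIntegral_of_continuousOn (Iio_mem_nhds hm)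
    (fun y hy => (continuous_ellipticDelta_zpow hy n).continuousOn) ?_
    fun y hy θ _ => hasDerivAt_ellipticDelta_zpow_left hy n θ
  have hzpow : ContinuousOn (fun p : ℝ × ℝ => ellipticDelta p.1 p.2 ^ (n - 2))
      (Iio 1 ×ˢ uIcc 0 (π / 2)) :=
    continuous_uncurry_ellipticDelta.continuousOn.zpow₀ _
      fun p hp => .inl (ellipticDelta_pos hp.1 p.2).ne'
  exact continuousOn_const.mul (ContinuousOn.mul (by fun_prop) hzpow)

theorem hasDerivAt_ellipticMoment_of_ne_zero (n : ℤ) (hm0 : m ≠ 0) (hm : m < 1) :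
    HasDerivAt (ellipticMoment n)
      (n / (2 * m) * (ellipticMoment n m - ellipticMoment (n - 2) m)) m := by
  convert hasDerivAt_ellipticMoment n hm using 1
  simp only [ellipticMoment]
  rw [← intervalIntegral.integral_sub (intervalIntegrable_ellipticDelta_zpow hm _ _ _)
    (intervalIntegrable_ellipticDelta_zpow hm _ _ _), ← intervalIntegral.integral_const_mul]
  refine intervalIntegral.integral_congr fun θ _ => ?_
  have hΔ := (ellipticDelta_pos hm θ).ne'
  have hsin : sin θ ^ 2 = (1 - ellipticDelta m θ ^ 2) / m := by
    rw [ellipticDelta_sq hm]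
    field_simp
    ring
  simp only [hsin, zpow_sub₀ hΔ, zpow_ofNat]
  field_simp
  ring

theorem ellipticMoment_recurrence (n : ℤ) (hm : m < 1) :
    (n + 2) * ellipticMoment (n + 2) m - (n + 1) * (2 - m) * ellipticMoment n m +
      n * (1 - m) * ellipticMoment (n - 2) m = 0 := by
  have hint (k : ℤ) (r : ℝ) :=
    (intervalIntegrable_ellipticDelta_zpow hm k 0 (π / 2)).const_mul r
  have hFTC := intervalIntegral.integral_eq_sub_of_hasDerivAt
    (fun θ _ => hasDerivAt_mul_sin_mul_cos_mul_ellipticDelta_zpow hm n θ)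
    (((hint (n + 2) (n + 2)).sub (hint n _)).add (hint (n - 2) _))
  rw [intervalIntegral.integral_add ((hint _ _).sub (hint _ _)) (hint _ _),
    intervalIntegral.integral_sub (hint _ _) (hint _ _)] at hFTC
  simpa only [ellipticMoment, intervalIntegral.integral_const_mul, cos_pi_div_two, sin_zero,
    zero_mul, mul_zero, sub_zero] using hFTC

theorem hasDerivAt_ellipticE (hm0 : m ≠ 0) (hm : m < 1) :
    HasDerivAt ellipticE ((ellipticE m - ellipticK m) / (2 * m)) m := by
  have h := hasDerivAt_ellipticMoment_of_ne_zero 1 hm0 hm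
  rw [show (1 : ℤ) - 2 = -1 by norm_num, ellipticMoment_one, ellipticMoment_neg_one] at h
  exact h.congr_deriv (by push_cast; ring)

theorem hasDerivAt_ellipticK (hm0 : m ≠ 0) (hm : m < 1) :
    HasDerivAt ellipticK ((ellipticE m / (1 - m) - ellipticK m) / (2 * m)) m := by
  have hcube : ellipticE m / (1 - m) = ellipticMoment (-3) m := by
    have h := ellipticMoment_recurrence (-1) hm
    rw [show (-1 : ℤ) + 2 = 1 by norm_num, show (-1 : ℤ) - 2 = -3 by norm_num,
      ellipticMoment_one] at h
    push_cast at h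
    rw [div_eq_iff (sub_pos.2 hm).ne']
    linear_combination h
  have h := hasDerivAt_ellipticMoment_of_ne_zero (-1) hm0 hm
  rw [show (-1 : ℤ) - 2 = -3 by norm_num, ← hcube, ellipticMoment_neg_one] at h
  exact h.congr_deriv (by push_cast; ring)

end Moment

section LegendreRelation

/-- The left-hand side of Legendre's relation, as a function of the parameter. -/
noncomputable def legendreForm (m : ℝ) : ℝ :=
  ellipticE m * ellipticK (1 - m) + ellipticE (1 - m) * ellipticK m
    - ellipticK m * ellipticK (1 - m)

variable {m : ℝ}

theorem ellipticE_zero : ellipticE 0 = π / 2 := by simp [ellipticE, ellipticDelta]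

theorem ellipticK_zero : ellipticK 0 = π / 2 := by simp [ellipticK, ellipticDelta]

theorem ellipticE_one : ellipticE 1 = 1 := by
  have hcos : EqOn (ellipticDelta 1) cos (uIcc 0 (π / 2)) := fun θ hθ => by
    rw [uIcc_of_le (by positivity)] at hθ
    rw [ellipticDelta, one_mul, ← cos_sq',
      Real.sqrt_sq (cos_nonneg_of_mem_Icc ⟨by linarith [hθ.1, pi_pos], hθ.2⟩)]
  rw [ellipticE, intervalIntegral.integral_congr hcos, integral_cos, sin_pi_div_two, sin_zero,
    sub_zero]

theorem continuous_ellipticE : Continuous ellipticE :=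
  intervalIntegral.continuous_parametric_intervalIntegral_of_continuous'
    continuous_uncurry_ellipticDelta 0 (π / 2)

theorem ellipticK_pos (hm : m < 1) : 0 < ellipticK m :=
  intervalIntegral.intervalIntegral_pos_of_pos (intervalIntegrable_inv_ellipticDelta hm _ _)
    (fun θ => inv_pos.2 (ellipticDelta_pos hm θ)) (by positivity)

theorem ellipticK_le (hm0 : 0 ≤ m) (hm : m < 1) : ellipticK m ≤ π / 2 * (√(1 - m))⁻¹ := by
  have h := intervalIntegral.integral_mono_on (a := 0) (b := π / 2) (by positivity)
    (intervalIntegrable_inv_ellipticDelta hm _ _)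
    (intervalIntegrable_const (c := (√(1 - m))⁻¹)) fun θ _ =>
      inv_anti₀ (Real.sqrt_pos.2 (sub_pos.2 hm)) (sqrt_one_sub_le_ellipticDelta hm0 θ)
  simpa only [ellipticK, intervalIntegral.integral_const, sub_zero, smul_eq_mul] using h

theorem differentiableAt_ellipticK (hm : m < 1) : DifferentiableAt ℝ ellipticK m :=
  ellipticMoment_neg_one ▸ (hasDerivAt_ellipticMoment (-1) hm).differentiableAt

theorem differentiableAt_ellipticE (hm : m < 1) : DifferentiableAt ℝ ellipticE m :=
  ellipticMoment_one ▸ (hasDerivAt_ellipticMoment 1 hm).differentiableAt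

theorem ellipticK_sub_ellipticE_isBigO :
    (fun m => ellipticK m - ellipticE m) =O[𝓝 0] fun m => m := by
  simpa only [Pi.sub_apply, ellipticK_zero, ellipticE_zero, sub_self, sub_zero] using
    ((differentiableAt_ellipticK one_pos).sub (differentiableAt_ellipticE one_pos)).isBigO_sub

theorem ellipticK_one_sub_isBigO :
    (fun m => ellipticK (1 - m)) =O[𝓝[>] 0] fun m => (√m)⁻¹ := by
  refine .of_bound (π / 2) ?_
  filter_upwards [Ioo_mem_nhdsGT (zero_lt_one' ℝ)] with m ⟨hm0, hm1⟩
  rw [Real.norm_of_nonneg (ellipticK_pos (sub_lt_self 1 hm0)).le,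
    Real.norm_of_nonneg (by positivity)]
  simpa only [sub_sub_cancel] using ellipticK_le (sub_nonneg.2 hm1.le) (sub_lt_self 1 hm0)

theorem tendsto_legendreForm_zero : Tendsto legendreForm (𝓝[>] 0) (𝓝 (π / 2)) := by
  have hK : Tendsto ellipticK (𝓝[>] 0) (𝓝 (π / 2)) :=
    ellipticK_zero ▸ (differentiableAt_ellipticK one_pos).continuousAt.tendsto.mono_left
      nhdsWithin_le_nhds
  have hE' : Tendsto (fun m => ellipticE (1 - m)) (𝓝[>] 0) (𝓝 1) := by
    have h : Continuous fun m => ellipticE (1 - m) := continuous_ellipticE.comp (by fun_prop)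
    simpa only [sub_zero, ellipticE_one] using (h.tendsto 0).mono_left nhdsWithin_le_nhds
  have hsqrt : Tendsto (fun m : ℝ => m * (√m)⁻¹) (𝓝[>] 0) (𝓝 0) := by
    simp only [← div_eq_mul_inv, Real.div_sqrt]
    simpa only [Real.sqrt_zero] using
      (Real.continuous_sqrt.tendsto 0).mono_left nhdsWithin_le_nhds
  have hcross : Tendsto (fun m => (ellipticK m - ellipticE m) * ellipticK (1 - m))
      (𝓝[>] 0) (𝓝 0) :=
    ((ellipticK_sub_ellipticE_isBigO.mono nhdsWithin_le_nhds).mul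
      ellipticK_one_sub_isBigO).trans_tendsto hsqrt
  have h := (hE'.mul hK).sub hcross
  rw [one_mul, sub_zero] at h
  refine h.congr fun m => ?_
  rw [legendreForm]
  ring

theorem hasDerivAt_legendreForm (hm0 : 0 < m) (hm : m < 1) : HasDerivAt legendreForm 0 m := by
  have hm0' : 1 - m ≠ 0 := (sub_pos.2 hm).ne'
  have hE := hasDerivAt_ellipticE hm0.ne' hm
  have hK := hasDerivAt_ellipticK hm0.ne' hm
  have hE' := (hasDerivAt_ellipticE hm0' (sub_lt_self 1 hm0)).comp_const_sub 1 m
  have hK' := (hasDerivAt_ellipticK hm0' (sub_lt_self 1 hm0)).comp_const_sub 1 m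
  refine (((hE.mul hK').add (hE'.mul hK)).sub (hK.mul hK')).congr_deriv ?_
  rw [sub_sub_cancel]
  field_simp
  ring

theorem legendre_relation (hm0 : 0 < m) (hm : m < 1) :
    ellipticE m * ellipticK (1 - m) + ellipticE (1 - m) * ellipticK m
      - ellipticK m * ellipticK (1 - m) = π / 2 := by
  obtain ⟨w, hw⟩ := isOpen_Ioo.exists_is_const_of_deriv_eq_zero isPreconnected_Ioo
    (fun y hy =>
      (hasDerivAt_legendreForm hy.1 hy.2).differentiableAt.differentiableWithinAt)
    fun y hy => (hasDerivAt_legendreForm hy.1 hy.2).deriv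
  have hlim : Tendsto legendreForm (𝓝[>] 0) (𝓝 w) := by
    refine tendsto_const_nhds.congr' ?_
    filter_upwards [Ioo_mem_nhdsGT (zero_lt_one' ℝ)] with y hy using (hw y hy).symm
  exact (hw m ⟨hm0, hm⟩).trans (tendsto_nhds_unique hlim tendsto_legendreForm_zero)

end LegendreRelation

section ChangeOfVariables

variable {a c m : ℝ}

theorem sin_pos_and_cos_pos_of_mem_Ioo {θ : ℝ} (hθ : θ ∈ Ioo 0 (π / 2)) :
    0 < sin θ ∧ 0 < cos θ :=
  ⟨sin_pos_of_pos_of_lt_pi hθ.1 (by linarith [hθ.2, pi_pos]),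
    cos_pos_of_mem_Ioo ⟨by linarith [hθ.1, pi_pos], hθ.2⟩⟩

theorem integral_mul_inv_sqrt_unit_gap (hm : m < 1) (g : ℝ → ℝ) :
    ∫ t in (0 : ℝ)..1, g t * (√((1 - t ^ 2) * (1 - m * t ^ 2)))⁻¹
      = ∫ θ in (0 : ℝ)..(π / 2), g (sin θ) * (ellipticDelta m θ)⁻¹ := by
  have hsub := intervalIntegral.integral_comp_mul_deriv_of_deriv_nonneg (a := 0) (b := π / 2)
    (g := fun t => g t * (√((1 - t ^ 2) * (1 - m * t ^ 2)))⁻¹) continuousOn_sin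
    (fun θ _ => hasDerivAt_sin θ) fun θ hθ => by
      rw [min_eq_left (by positivity), max_eq_right (by positivity)] at hθ
      exact (sin_pos_and_cos_pos_of_mem_Ioo hθ).2.le
  rw [sin_zero, sin_pi_div_two] at hsub
  rw [← hsub]
  refine intervalIntegral.integral_congr_Ioo_of_le (by positivity) fun θ hθ => ?_
  have hcos := (sin_pos_and_cos_pos_of_mem_Ioo hθ).2
  have hsqrt : √((1 - sin θ ^ 2) * (1 - m * sin θ ^ 2)) = cos θ * ellipticDelta m θ := by
    rw [← cos_sq', Real.sqrt_mul (sq_nonneg _), Real.sqrt_sq hcos.le, ellipticDelta]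
  have hΔ := ellipticDelta_pos hm θ
  simp only [Function.comp_apply, hsqrt]
  field_simp

theorem sq_div_lt_one (ha : 0 ≤ a) (hac : a < c) : (a / c) ^ 2 < 1 :=
  have hc := ha.trans_lt hac
  pow_lt_one₀ (div_nonneg ha hc.le) ((div_lt_one hc).2 hac) two_ne_zero

theorem integral_mul_inv_sqrt_gap (ha : 0 < a) (hac : a < c) (g : ℝ → ℝ) :
    ∫ s in (0 : ℝ)..a, g s * (√((c ^ 2 - s ^ 2) * (a ^ 2 - s ^ 2)))⁻¹
      = c⁻¹ * ∫ θ in (0 : ℝ)..(π / 2), g (a * sin θ) * (ellipticDelta ((a / c) ^ 2) θ)⁻¹ := by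
  have hc := ha.trans hac
  have hm := sq_div_lt_one ha.le hac
  have hscale := intervalIntegral.mul_integral_comp_mul_left (a := 0) (b := 1) a
    (f := fun s => g s * (√((c ^ 2 - s ^ 2) * (a ^ 2 - s ^ 2)))⁻¹)
  rw [mul_zero, mul_one] at hscale
  rw [← hscale, ← integral_mul_inv_sqrt_unit_gap hm (fun t => g (a * t)),
    ← intervalIntegral.integral_const_mul, ← intervalIntegral.integral_const_mul]
  refine intervalIntegral.integral_congr fun t _ => ?_
  have hradicand : (c ^ 2 - (a * t) ^ 2) * (a ^ 2 - (a * t) ^ 2)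
      = (c * a) ^ 2 * ((1 - t ^ 2) * (1 - (a / c) ^ 2 * t ^ 2)) := by
    field_simp
  simp only [hradicand, Real.sqrt_mul (sq_nonneg (c * a)), Real.sqrt_sq (mul_pos hc ha).le]
  field_simp

theorem integral_mul_inv_sqrt_unit_band (hm0 : 0 < m) (hm : m < 1) (g : ℝ → ℝ) :
    ∫ t in √(1 - m)..1, g t * (√((1 - t ^ 2) * (t ^ 2 - (1 - m))))⁻¹
      = ∫ θ in (0 : ℝ)..(π / 2), g (ellipticDelta m θ) * (ellipticDelta m θ)⁻¹ := by
  have hsub := intervalIntegral.integral_comp_mul_deriv_of_deriv_nonpos (a := 0) (b := π / 2)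
    (g := fun t => g t * (√((1 - t ^ 2) * (t ^ 2 - (1 - m))))⁻¹)
    (continuous_ellipticDelta m).continuousOn
    (fun θ _ => hasDerivAt_ellipticDelta_right hm θ) fun θ hθ => by
      rw [min_eq_left (by positivity), max_eq_right (by positivity)] at hθ
      obtain ⟨hsin, hcos⟩ := sin_pos_and_cos_pos_of_mem_Ioo hθ
      have hΔ := ellipticDelta_pos hm θ
      rw [neg_nonpos]
      positivity
  have hstart : ellipticDelta m 0 = 1 := by simp [ellipticDelta]
  have hend : ellipticDelta m (π / 2) = √(1 - m) := by simp [ellipticDelta]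
  rw [hstart, hend] at hsub
  rw [intervalIntegral.integral_symm, ← hsub, ← intervalIntegral.integral_neg]
  refine intervalIntegral.integral_congr_Ioo_of_le (by positivity) fun θ hθ => ?_
  obtain ⟨hsin, hcos⟩ := sin_pos_and_cos_pos_of_mem_Ioo hθ
  have hΔ := ellipticDelta_pos hm θ
  have hsqrt : √((1 - ellipticDelta m θ ^ 2) * (ellipticDelta m θ ^ 2 - (1 - m)))
      = m * sin θ * cos θ := by
    rw [Real.sqrt_eq_iff_mul_self_eq_of_pos (by positivity), ellipticDelta_sq hm]
    linear_combination m ^ 2 * sin θ ^ 2 * cos_sq' θ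
  simp only [Function.comp_apply, hsqrt]
  field_simp

theorem integral_mul_inv_sqrt_band (ha : 0 < a) (hac : a < c) (g : ℝ → ℝ) :
    ∫ s in a..c, g s * (√((c ^ 2 - s ^ 2) * (s ^ 2 - a ^ 2)))⁻¹
      = c⁻¹ * ∫ θ in (0 : ℝ)..(π / 2),
          g (c * ellipticDelta (1 - (a / c) ^ 2) θ) * (ellipticDelta (1 - (a / c) ^ 2) θ)⁻¹ := by
  have hc := ha.trans hac
  have hm' : 1 - (a / c) ^ 2 < 1 := sub_lt_self 1 (by positivity)
  have hscale := intervalIntegral.mul_integral_comp_mul_left (a := a / c) (b := 1) c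
    (f := fun s => g s * (√((c ^ 2 - s ^ 2) * (s ^ 2 - a ^ 2)))⁻¹)
  have hunit := integral_mul_inv_sqrt_unit_band (sub_pos.2 (sq_div_lt_one ha.le hac)) hm'
    (fun t => g (c * t))
  rw [sub_sub_cancel, Real.sqrt_sq (by positivity)] at hunit
  rw [mul_div_cancel₀ _ hc.ne', mul_one] at hscale
  rw [← hscale, ← hunit, ← intervalIntegral.integral_const_mul,
    ← intervalIntegral.integral_const_mul]
  refine intervalIntegral.integral_congr fun t _ => ?_
  have hradicand : (c ^ 2 - (c * t) ^ 2) * ((c * t) ^ 2 - a ^ 2)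
      = (c ^ 2) ^ 2 * ((1 - t ^ 2) * (t ^ 2 - (a / c) ^ 2)) := by
    field_simp
  simp only [hradicand, Real.sqrt_mul (sq_nonneg (c ^ 2)), Real.sqrt_sq (sq_nonneg c)]
  field_simp

theorem integral_inv_sqrt_unit_gap (hm : m < 1) :
    ∫ t in (0 : ℝ)..1, (√((1 - t ^ 2) * (1 - m * t ^ 2)))⁻¹ = ellipticK m := by
  simpa only [one_mul, ellipticK] using integral_mul_inv_sqrt_unit_gap hm fun _ => 1

theorem integral_inv_sqrt_gap (ha : 0 < a) (hac : a < c) :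
    ∫ s in (0 : ℝ)..a, (√((c ^ 2 - s ^ 2) * (a ^ 2 - s ^ 2)))⁻¹
      = c⁻¹ * ellipticK ((a / c) ^ 2) := by
  simpa only [one_mul, ellipticK] using integral_mul_inv_sqrt_gap ha hac fun _ => 1

theorem integral_sq_mul_inv_sqrt_gap (ha : 0 < a) (hac : a < c) :
    ∫ s in (0 : ℝ)..a, s ^ 2 * (√((c ^ 2 - s ^ 2) * (a ^ 2 - s ^ 2)))⁻¹
      = c * (ellipticK ((a / c) ^ 2) - ellipticE ((a / c) ^ 2)) := by
  have hc := ha.trans hac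
  have hm := sq_div_lt_one ha.le hac
  rw [integral_mul_inv_sqrt_gap ha hac (· ^ 2), ellipticK, ellipticE,
    ← intervalIntegral.integral_sub (intervalIntegrable_inv_ellipticDelta hm _ _)
      (intervalIntegrable_ellipticDelta _ _ _),
    ← intervalIntegral.integral_const_mul, ← intervalIntegral.integral_const_mul]
  refine intervalIntegral.integral_congr fun θ _ => ?_
  have hsin : (a * sin θ) ^ 2 = c ^ 2 * (1 - ellipticDelta ((a / c) ^ 2) θ ^ 2) := by
    rw [ellipticDelta_sq hm]
    field_simp
    ring
  simp only [hsin]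
  field_simp

theorem integral_sq_add_mul_inv_sqrt_band (ha : 0 < a) (hac : a < c) (h : ℝ) :
    ∫ s in a..c, (s ^ 2 + h) * (√((c ^ 2 - s ^ 2) * (s ^ 2 - a ^ 2)))⁻¹
      = c * ellipticE (1 - (a / c) ^ 2) + h / c * ellipticK (1 - (a / c) ^ 2) := by
  have hc := ha.trans hac
  have hm' : 1 - (a / c) ^ 2 < 1 := sub_lt_self 1 (by positivity)
  rw [integral_mul_inv_sqrt_band ha hac (· ^ 2 + h), ellipticK, ellipticE,
    ← intervalIntegral.integral_const_mul, ← intervalIntegral.integral_const_mul,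
    ← intervalIntegral.integral_const_mul,
    ← intervalIntegral.integral_add ((intervalIntegrable_ellipticDelta _ _ _).const_mul _)
      ((intervalIntegrable_inv_ellipticDelta hm' _ _).const_mul _)]
  refine intervalIntegral.integral_congr fun θ _ => ?_
  generalize ellipticDelta (1 - (a / c) ^ 2) θ = d at *
  field_simp

end ChangeOfVariables

/-- identity (2.16)(b) of Lemma 2.3 in concrete form:
`∫_a^c (s² + h)·((c² − s²)(s² − a²))^{-1/2} ds = πc/(2K(m))` with `m = a/c` and
`h` the normalized first moment of the gap weight. -/
theorem wave_number_elliptic_eval (a c : ℝ) (ha : 0 < a) (hac : a < c) :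
    ∫ s in a..c,
      (s ^ 2 +
        (-(∫ s in (0:ℝ)..a, s ^ 2 * (Real.sqrt ((c ^ 2 - s ^ 2) * (a ^ 2 - s ^ 2)))⁻¹) /
          (∫ s in (0:ℝ)..a, (Real.sqrt ((c ^ 2 - s ^ 2) * (a ^ 2 - s ^ 2)))⁻¹))) *
        (Real.sqrt ((c ^ 2 - s ^ 2) * (s ^ 2 - a ^ 2)))⁻¹
    = Real.pi * c /
        (2 * ∫ t in (0:ℝ)..1, (Real.sqrt ((1 - t ^ 2) * (1 - (a / c) ^ 2 * t ^ 2)))⁻¹) := by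
  have hc := ha.trans hac
  have hm0 : 0 < (a / c) ^ 2 := by positivity
  have hm := sq_div_lt_one ha.le hac
  have hK := ellipticK_pos hm
  have hlegendre := legendre_relation hm0 hm
  rw [integral_sq_add_mul_inv_sqrt_band ha hac, integral_sq_mul_inv_sqrt_gap ha hac,
    integral_inv_sqrt_gap ha hac, integral_inv_sqrt_unit_gap hm]
  generalize (a / c) ^ 2 = m at *
  field_simp
  linear_combination 2 * hlegendre
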